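/- Let k ≥ 3 be an integer and let x = (x_1, …, x_k) lie in the standard simplex Δ_k. If x_1 ≤ 6/11 and x_2 ≤ 6/11, then d_k(x) ≤ 2.014096. If x_1 ≥ 6/11 or x_2 ≥ 6/11, then d_k(x) ≤ 11/12. -/

import Mathlib

/-- The cumulative distribution function `F(z) = min((11/6)z, 1)` of the ICUT scheme. -/
noncomputable def Fcdf (z : ℝ) : ℝ := min ((11 / 6) * z) 1

/-- The probability density `F′(z)`: `11/6` for `z < 6/11` and `0` for `z ≥ 6/11`. -/
noncomputable def Fpdf (z : ℝ) : ℝ := if z < 6 / 11 then 11 / 6 else 0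

/-- The density `d_k(x)` with which ICUT cuts an infinitesimal `1,2`-aligned segment at
`x = (x_1, …, x_k)`:
`d_k(x) = (1/k!) ∑_σ [ F′(x_1) ∏_{i : σ(i) < σ(1)} (1 − F(x_i))
                      + F′(x_2) ∏_{i : σ(i) < σ(2)} (1 − F(x_i)) ]`. -/
noncomputable def dDensity (k : ℕ) (hk : 2 ≤ k) (x : Fin k → ℝ) : ℝ :=
  ((Nat.factorial k : ℝ))⁻¹ *
    ∑ σ : Equiv.Perm (Fin k),
      (Fpdf (x ⟨0, by omega⟩) *
          ∏ i ∈ Finset.univ.filter (fun i => σ i < σ ⟨0, by omega⟩), (1 - Fcdf (x i)) +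
        Fpdf (x ⟨1, by omega⟩) *
          ∏ i ∈ Finset.univ.filter (fun i => σ i < σ ⟨1, by omega⟩), (1 - Fcdf (x i)))

/-- `C_k(x_1, x_2) = d_k(x_1, x_2, c, …, c)` where `c = (1 − x_1 − x_2)/(k − 2)`. -/
noncomputable def Cdensity (k : ℕ) (hk : 3 ≤ k) (x1 x2 : ℝ) : ℝ :=
  dDensity k (by omega)
    (fun i => if (i : ℕ) = 0 then x1 else if (i : ℕ) = 1 then x2
      else (1 - x1 - x2) / ((k : ℝ) - 2))

/-!
Drawing the random order from independent uniform arrival times turns the average over permutations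
into `∫₀¹ ∏_{i ≠ j} (1 - t F(x_i)) dt`. If some `F(x_m) = 1` with `m ≠ j`, the integrand is at most
`1 - t`, which gives `1/2` for each term with a nonzero density. Otherwise `∑ F(x_i) = 11/6`;
writing `s` for the part of this sum outside the coordinates `1, 2` and using `1 - u ≤ exp (-u)`,
the two integrals together are at most `∫₀¹ (2 - t (11/6 - s)) exp (-t s) dt`. A Taylor polynomial
of the exponential reduces this to a polynomial inequality in `s ∈ [0, 11/6]`.
-/

open Finset
open scoped Nat

section RandomOrder

variable {ι : Type*} [Fintype ι] [LinearOrder ι]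

lemma card_perm_forall_le_eq_of_mem {T : Finset ι} {j j' : ι} (hj : j ∈ T) (hj' : j' ∈ T) :
    #{σ : Equiv.Perm ι | ∀ i ∈ T, σ i ≤ σ j'} = #{σ : Equiv.Perm ι | ∀ i ∈ T, σ i ≤ σ j} := by
  have swap_mem : ∀ i ∈ T, Equiv.swap j j' i ∈ T := by
    intro i hi
    rw [Equiv.swap_apply_def]
    split_ifs <;> assumption
  refine Finset.card_equiv (Equiv.mulRight (Equiv.swap j j')) fun σ => ?_
  simp only [mem_filter_univ, Equiv.coe_mulRight, Equiv.Perm.mul_apply, Equiv.swap_apply_left]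
  refine ⟨fun h i hi => h _ (swap_mem i hi), fun h i hi => ?_⟩
  simpa only [Equiv.swap_apply_self] using h _ (swap_mem i hi)

lemma sum_card_perm_forall_le {T : Finset ι} (hT : T.Nonempty) :
    ∑ j ∈ T, #{σ : Equiv.Perm ι | ∀ i ∈ T, σ i ≤ σ j} = (Fintype.card ι)! := by
  have card_last_eq_one (σ : Equiv.Perm ι) : #{j ∈ T | ∀ i ∈ T, σ i ≤ σ j} = 1 := by
    obtain ⟨m, hm, hmax⟩ := T.exists_max_image σ hT
    refine card_eq_one.2 ⟨m, eq_singleton_iff_unique_mem.2 ⟨mem_filter.2 ⟨hm, hmax⟩, ?_⟩⟩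
    intro j hj
    obtain ⟨hjT, hjmax⟩ := mem_filter.1 hj
    exact σ.injective (le_antisymm (hmax j hjT) (hjmax m hm))
  calc ∑ j ∈ T, #{σ : Equiv.Perm ι | ∀ i ∈ T, σ i ≤ σ j}
      = ∑ σ : Equiv.Perm ι, #{j ∈ T | ∀ i ∈ T, σ i ≤ σ j} :=
        sum_card_bipartiteAbove_eq_sum_card_bipartiteBelow _
    _ = (Fintype.card ι)! := by simp [card_last_eq_one, Fintype.card_perm]

theorem card_perm_forall_lt_mul {S : Finset ι} {j : ι} (hj : j ∉ S) :
    #{σ : Equiv.Perm ι | ∀ i ∈ S, σ i < σ j} * (#S + 1) = (Fintype.card ι)! := by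
  have lt_iff_le (σ : Equiv.Perm ι) :
      (∀ i ∈ S, σ i < σ j) ↔ ∀ i ∈ insert j S, σ i ≤ σ j := by
    simp only [mem_insert, forall_eq_or_imp, le_refl, true_and]
    refine forall₂_congr fun i hi => (σ.injective.ne ?_).le_iff_lt.symm
    exact ne_of_mem_of_not_mem hi hj
  simp only [lt_iff_le]
  rw [← sum_card_perm_forall_le (insert_nonempty j S),
    sum_congr rfl fun j' hj' => card_perm_forall_le_eq_of_mem (mem_insert_self j S) hj',
    sum_const, card_insert_of_notMem hj, smul_eq_mul, mul_comm]

lemma sum_perm_prod_one_add {R : Type*} [CommSemiring R] (f : ι → R) (j : ι) :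
    ∑ σ : Equiv.Perm ι, ∏ i with σ i < σ j, (1 + f i) =
      ∑ S ∈ (univ.erase j).powerset,
        (#{σ : Equiv.Perm ι | ∀ i ∈ S, σ i < σ j} : R) * ∏ i ∈ S, f i := by
  have powerset_before (σ : Equiv.Perm ι) :
      ({i | σ i < σ j} : Finset ι).powerset =
        {S ∈ (univ.erase j).powerset | ∀ i ∈ S, σ i < σ j} := by
    ext S
    simp only [mem_powerset, mem_filter, subset_iff, mem_univ, true_and, mem_erase, and_true]
    exact ⟨fun h => ⟨fun i hi hij => (h hi).ne (congrArg σ hij), fun i hi => h hi⟩,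
      fun h i hi => h.2 hi⟩
  simp_rw [prod_one_add, powerset_before, sum_filter]
  rw [sum_comm]
  refine sum_congr rfl fun S _ => ?_
  rw [← sum_filter, sum_const, nsmul_eq_mul]

/-- The probability that a point is still uncaptured when terminal `j` is reached, if the terminals
`ι` are processed in a uniformly random order and terminal `i`, once reached, captures the point
with probability `F i`, independently of everything else. -/
noncomputable def uncapturedProb (F : ι → ℝ) (j : ι) : ℝ :=
  ((Fintype.card ι)! : ℝ)⁻¹ * ∑ σ : Equiv.Perm ι, ∏ i with σ i < σ j, (1 - F i)

lemma integral_prod_one_add_mul {κ : Type*} (s : Finset κ) (f : κ → ℝ) :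
    ∫ t in (0 : ℝ)..1, ∏ i ∈ s, (1 + t * f i) = ∑ S ∈ s.powerset, (∏ i ∈ S, f i) / (#S + 1) := by
  classical
  simp_rw [prod_one_add, prod_mul_distrib, prod_const]
  rw [intervalIntegral.integral_finsetSum
    fun S _ => Continuous.intervalIntegrable (by fun_prop) _ _]
  refine sum_congr rfl fun S _ => ?_
  rw [intervalIntegral.integral_mul_const, integral_pow, one_pow, zero_pow (#S).succ_ne_zero]
  ring

/-- Here `t` is the arrival time of `j`, so that each other terminal arrives before `j` with
probability `t`. -/
theorem uncapturedProb_eq_integral (F : ι → ℝ) (j : ι) :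
    uncapturedProb F j = ∫ t in (0 : ℝ)..1, ∏ i ∈ univ.erase j, (1 - t * F i) := by
  have card_ne_zero : ((Fintype.card ι)! : ℝ) ≠ 0 := by positivity
  simp_rw [uncapturedProb, sub_eq_add_neg, ← mul_neg]
  rw [sum_perm_prod_one_add, integral_prod_one_add_mul, mul_sum]
  refine sum_congr rfl fun S hS => ?_
  have count : (#{σ : Equiv.Perm ι | ∀ i ∈ S, σ i < σ j} : ℝ) * (#S + 1) = (Fintype.card ι)! := by
    exact_mod_cast card_perm_forall_lt_mul fun hjS => notMem_erase j univ (mem_powerset.1 hS hjS)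
  field_simp
  linear_combination (∏ i ∈ S, -F i) * count

variable {F : ι → ℝ}

lemma uncapturedProb_le_half (hF0 : ∀ i, 0 ≤ F i) (hF1 : ∀ i, F i ≤ 1) {j m : ι} (hmj : m ≠ j)
    (hm : F m = 1) : uncapturedProb F j ≤ 1 / 2 := by
  have integral_one_sub : ∫ t in (0 : ℝ)..1, (1 - t) = 1 / 2 := by
    rw [intervalIntegral.integral_sub (by simp) (by simp)]
    norm_num
  rw [uncapturedProb_eq_integral, ← integral_one_sub]
  refine intervalIntegral.integral_mono_on zero_le_one
    (Continuous.intervalIntegrable (by fun_prop) _ _)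
    (Continuous.intervalIntegrable (by fun_prop) _ _) fun t ⟨ht0, ht1⟩ => ?_
  have prod_le_one : ∏ i ∈ (univ.erase j).erase m, (1 - t * F i) ≤ 1 :=
    Finset.prod_le_one (fun i _ => sub_nonneg.2 (mul_le_one₀ ht1 (hF0 i) (hF1 i)))
      fun i _ => sub_le_self 1 (mul_nonneg ht0 (hF0 i))
  rw [← mul_prod_erase _ _ (mem_erase.2 ⟨hmj, mem_univ m⟩), hm, mul_one]
  exact mul_le_of_le_one_right (sub_nonneg.2 ht1) prod_le_one

theorem uncapturedProb_add_le_integral (hF0 : ∀ i, 0 ≤ F i) (hF1 : ∀ i, F i ≤ 1) {a b : ι}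
    (hab : a ≠ b) :
    uncapturedProb F a + uncapturedProb F b ≤
      ∫ t in (0 : ℝ)..1,
        (2 - t * (F a + F b)) * Real.exp (-(t * ∑ i ∈ (univ.erase a).erase b, F i)) := by
  rw [uncapturedProb_eq_integral, uncapturedProb_eq_integral, ← intervalIntegral.integral_add
    (Continuous.intervalIntegrable (by fun_prop) _ _)
    (Continuous.intervalIntegrable (by fun_prop) _ _)]
  refine intervalIntegral.integral_mono_on zero_le_one
    (Continuous.intervalIntegrable (by fun_prop) _ _)
    (Continuous.intervalIntegrable (by fun_prop) _ _) fun t ⟨_, ht1⟩ => ?_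
  have tF_le_one (i : ι) : t * F i ≤ 1 := mul_le_one₀ ht1 (hF0 i) (hF1 i)
  have prod_le_exp : ∏ i ∈ (univ.erase a).erase b, (1 - t * F i) ≤
      Real.exp (-(t * ∑ i ∈ (univ.erase a).erase b, F i)) := by
    rw [mul_sum, ← sum_neg_distrib, Real.exp_sum]
    exact Finset.prod_le_prod (fun i _ => sub_nonneg.2 (tF_le_one i))
      fun i _ => Real.one_sub_le_exp_neg _
  calc ∏ i ∈ univ.erase a, (1 - t * F i) + ∏ i ∈ univ.erase b, (1 - t * F i)
      = (2 - t * (F a + F b)) * ∏ i ∈ (univ.erase a).erase b, (1 - t * F i) := by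
        rw [← mul_prod_erase _ _ (mem_erase.2 ⟨hab.symm, mem_univ b⟩),
          ← mul_prod_erase _ _ (mem_erase.2 ⟨hab, mem_univ a⟩), erase_right_comm (a := b)]
        ring
    _ ≤ _ := mul_le_mul_of_nonneg_left prod_le_exp (by linarith [tF_le_one a, tF_le_one b])

end RandomOrder

section ExponentialIntegral

lemma hasDerivAt_sum_neg_pow_div_factorial_mul_exp (n : ℕ) (x : ℝ) :
    HasDerivAt (fun y : ℝ => (∑ i ∈ range (n + 1), (-y) ^ i / i !) * Real.exp y)
      ((-x) ^ n / n ! * Real.exp x) x := by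
  have deriv_sum : HasDerivAt (fun y : ℝ => ∑ i ∈ range (n + 1), (-y) ^ i / i !)
      (-∑ i ∈ range n, (-x) ^ i / i !) x := by
    simp_rw [sum_range_succ', pow_zero, ← sum_neg_distrib]
    refine HasDerivAt.add_const _ (HasDerivAt.fun_sum fun i _ => ?_)
    refine (((hasDerivAt_neg x).fun_pow (i + 1)).div_const ((i + 1)! : ℝ)).congr_deriv ?_
    rw [Nat.factorial_succ, Nat.add_sub_cancel]
    push_cast
    field_simp
  refine (deriv_sum.mul (Real.hasDerivAt_exp x)).congr_deriv ?_
  rw [sum_range_succ]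
  ring

lemma exp_neg_le_sum_of_even {n : ℕ} (hn : Even n) {x : ℝ} (hx : 0 ≤ x) :
    Real.exp (-x) ≤ ∑ i ∈ range (n + 1), (-x) ^ i / i ! := by
  have mono : Monotone fun y : ℝ => (∑ i ∈ range (n + 1), (-y) ^ i / i !) * Real.exp y :=
    monotone_of_hasDerivAt_nonneg (hasDerivAt_sum_neg_pow_div_factorial_mul_exp n)
      fun y => mul_nonneg (div_nonneg (hn.pow_nonneg _) (Nat.cast_nonneg _)) (Real.exp_nonneg y)
  rw [Real.exp_neg, inv_le_iff_one_le_mul₀ (Real.exp_pos x)]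
  simpa [sum_range_succ'] using mono hx

lemma integral_linear_mul_sum (a b s : ℝ) (n : ℕ) :
    ∫ t in (0 : ℝ)..1, (a - t * b) * ∑ i ∈ range n, (-(t * s)) ^ i / i ! =
      ∑ i ∈ range n, (-s) ^ i / i ! * (a / (i + 1) - b / (i + 2)) := by
  have integrand_eq (t : ℝ) : (a - t * b) * ∑ i ∈ range n, (-(t * s)) ^ i / i ! =
      ∑ i ∈ range n, (-s) ^ i / i ! * (a * t ^ i - b * t ^ (i + 1)) := by
    rw [mul_sum]
    refine sum_congr rfl fun i _ => ?_
    rw [← mul_neg, mul_pow]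
    ring
  simp_rw [integrand_eq]
  rw [intervalIntegral.integral_finsetSum
    fun i _ => Continuous.intervalIntegrable (by fun_prop) _ _]
  refine sum_congr rfl fun i _ => ?_
  rw [intervalIntegral.integral_const_mul, intervalIntegral.integral_sub
    (Continuous.intervalIntegrable (by fun_prop) _ _)
    (Continuous.intervalIntegrable (by fun_prop) _ _), intervalIntegral.integral_const_mul,
    intervalIntegral.integral_const_mul, integral_pow, integral_pow]
  push_cast
  simp only [one_pow, zero_pow (Nat.succ_ne_zero _), sub_zero]
  ring

lemma integral_linear_mul_exp_neg_le {a b s : ℝ} (ha : 0 ≤ a) (hba : b ≤ a) (hs : 0 ≤ s) {n : ℕ}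
    (hn : Even n) :
    ∫ t in (0 : ℝ)..1, (a - t * b) * Real.exp (-(t * s)) ≤
      ∑ i ∈ range (n + 1), (-s) ^ i / i ! * (a / (i + 1) - b / (i + 2)) := by
  rw [← integral_linear_mul_sum]
  refine intervalIntegral.integral_mono_on zero_le_one
    (Continuous.intervalIntegrable (by fun_prop) _ _)
    (Continuous.intervalIntegrable (by fun_prop) _ _) fun t ⟨ht0, ht1⟩ => ?_
  exact mul_le_mul_of_nonneg_left (exp_neg_le_sum_of_even hn (mul_nonneg ht0 hs)) (by nlinarith)

lemma taylor_polynomial_le {s : ℝ} (hs0 : 0 ≤ s) (hs1 : s ≤ 11 / 6) :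
    ∑ i ∈ range 7, (-s) ^ i / i ! * (2 / (i + 1) - (11 / 6 - s) / (i + 2)) ≤
      6 / 11 * 2.014096 := by
  -- The polynomial peaks near `s = 0.294812`, barely below the bound: the gap is, up to a tiny
  -- affine function, `(s - 0.294812) ^ 2` times a quintic positive on `[0, 11 / 6]`.
  have even_term (m : ℕ) : 0 ≤ (s - 0.294812) ^ 2 * s ^ m := by positivity
  have odd_term (m : ℕ) : 0 ≤ (s - 0.294812) ^ 2 * s ^ m * (11 / 6 - s) :=
    mul_nonneg (even_term m) (sub_nonneg.2 hs1)
  simp only [sum_range_succ, sum_range_zero, Nat.factorial]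
  norm_num
  linarith [even_term 0, even_term 2, even_term 4, odd_term 0, odd_term 2, odd_term 4]

end ExponentialIntegral

section Density

lemma Fcdf_nonneg {z : ℝ} (hz : 0 ≤ z) : 0 ≤ Fcdf z :=
  le_min (by positivity) zero_le_one

lemma Fcdf_le_one (z : ℝ) : Fcdf z ≤ 1 :=
  min_le_right _ _

lemma Fcdf_of_le {z : ℝ} (hz : z ≤ 6 / 11) : Fcdf z = 11 / 6 * z :=
  min_eq_left (by linarith)

lemma Fcdf_of_ge {z : ℝ} (hz : 6 / 11 ≤ z) : Fcdf z = 1 :=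
  min_eq_right (by linarith)

lemma Fpdf_of_lt {z : ℝ} (hz : z < 6 / 11) : Fpdf z = 11 / 6 :=
  if_pos hz

lemma Fpdf_of_ge {z : ℝ} (hz : 6 / 11 ≤ z) : Fpdf z = 0 :=
  if_neg hz.not_gt

lemma dDensity_eq_uncapturedProb (k : ℕ) (hk : 2 ≤ k) (x : Fin k → ℝ) :
    dDensity k hk x =
      Fpdf (x ⟨0, by omega⟩) * uncapturedProb (fun i => Fcdf (x i)) ⟨0, by omega⟩ +
        Fpdf (x ⟨1, by omega⟩) * uncapturedProb (fun i => Fcdf (x i)) ⟨1, by omega⟩ := by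
  simp only [dDensity, uncapturedProb, Fintype.card_fin, sum_add_distrib, ← mul_sum]
  ring

variable {ι : Type*} [Fintype ι] [LinearOrder ι]

lemma uncapturedProb_add_le_of_sum_eq {F : ι → ℝ} (hF0 : ∀ i, 0 ≤ F i) (hF1 : ∀ i, F i ≤ 1)
    (hF : ∑ i, F i = 11 / 6) {a b : ι} (hab : a ≠ b) :
    uncapturedProb F a + uncapturedProb F b ≤ 6 / 11 * 2.014096 := by
  set s := ∑ i ∈ (univ.erase a).erase b, F i
  have add_eq : F a + F b = 11 / 6 - s := by
    rw [← hF, ← add_sum_erase _ _ (mem_univ a),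
      ← add_sum_erase _ _ (mem_erase.2 ⟨hab.symm, mem_univ b⟩)]
    ring
  have s_nonneg : 0 ≤ s := sum_nonneg fun i _ => hF0 i
  have s_le : s ≤ 11 / 6 := by linarith [hF0 a, hF0 b]
  calc uncapturedProb F a + uncapturedProb F b
      ≤ ∫ t in (0 : ℝ)..1, (2 - t * (F a + F b)) * Real.exp (-(t * s)) :=
        uncapturedProb_add_le_integral hF0 hF1 hab
    _ ≤ ∑ i ∈ range 7, (-s) ^ i / i ! * (2 / (i + 1) - (F a + F b) / (i + 2)) :=
        integral_linear_mul_exp_neg_le zero_le_two (by linarith [hF1 a, hF1 b]) s_nonneg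
          (by decide : Even 6)
    _ ≤ 6 / 11 * 2.014096 := add_eq ▸ taylor_polynomial_le s_nonneg s_le

lemma Fpdf_mul_uncapturedProb_le {x : ι → ℝ} (hx : ∀ i, 0 ≤ x i) {m : ι} (hm : 6 / 11 ≤ x m)
    (a : ι) : Fpdf (x a) * uncapturedProb (fun i => Fcdf (x i)) a ≤ 11 / 12 := by
  rcases lt_or_ge (x a) (6 / 11) with ha | ha
  · have hma : m ≠ a := by
      rintro rfl
      exact ha.not_ge hm
    have le_half := uncapturedProb_le_half (fun i => Fcdf_nonneg (hx i))
      (fun i => Fcdf_le_one (x i)) hma (Fcdf_of_ge hm)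
    rw [Fpdf_of_lt ha]
    linarith
  · rw [Fpdf_of_ge ha]
    norm_num

theorem dDensity_le_of_six_elevenths_le (k : ℕ) (hk : 2 ≤ k) (x : Fin k → ℝ)
    (hx : ∀ i, 0 ≤ x i)
    (h : 6 / 11 ≤ x ⟨0, by omega⟩ ∨ 6 / 11 ≤ x ⟨1, by omega⟩) :
    dDensity k hk x ≤ 11 / 12 := by
  rw [dDensity_eq_uncapturedProb]
  rcases h with h | h
  · rw [Fpdf_of_ge h, zero_mul, zero_add]
    exact Fpdf_mul_uncapturedProb_le hx h _
  · rw [Fpdf_of_ge h, zero_mul, add_zero]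
    exact Fpdf_mul_uncapturedProb_le hx h _

theorem dDensity_bounds_general (k : ℕ) (hk : 2 ≤ k) (x : Fin k → ℝ)
    (hx : x ∈ stdSimplex ℝ (Fin k)) :
    dDensity k hk x ≤ 2.014096 ∧
      (6 / 11 ≤ x ⟨0, by omega⟩ ∨ 6 / 11 ≤ x ⟨1, by omega⟩ → dDensity k hk x ≤ 11 / 12) := by
  refine ⟨?_, dDensity_le_of_six_elevenths_le k hk x hx.1⟩
  rw [dDensity_eq_uncapturedProb]
  by_cases! h : ∃ m, 6 / 11 ≤ x m
  · obtain ⟨m, hm⟩ := h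
    linarith [Fpdf_mul_uncapturedProb_le hx.1 hm ⟨0, by omega⟩,
      Fpdf_mul_uncapturedProb_le hx.1 hm ⟨1, by omega⟩]
  · have sum_Fcdf : ∑ i, Fcdf (x i) = 11 / 6 := by
      simp_rw [Fcdf_of_le (h _).le, ← mul_sum, hx.2, mul_one]
    have sum_le := uncapturedProb_add_le_of_sum_eq (fun i => Fcdf_nonneg (hx.1 i))
      (fun i => Fcdf_le_one (x i)) sum_Fcdf
      (a := ⟨0, by omega⟩) (b := ⟨1, by omega⟩) (by simp)
    rw [Fpdf_of_lt (h _), Fpdf_of_lt (h _)]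
    linarith

end Density

/-- if `x ∈ Δ_k` with `x_1, x_2 ≤ 6/11` then `d_k(x) ≤ 2.014096`;
if `x_1 ≥ 6/11` or `x_2 ≥ 6/11` then `d_k(x) ≤ 11/12`. -/
theorem dDensity_bounds (k : ℕ) (hk : 3 ≤ k) (x : Fin k → ℝ)
    (hx : x ∈ stdSimplex ℝ (Fin k)) :
    ((x ⟨0, by omega⟩ ≤ 6 / 11 ∧ x ⟨1, by omega⟩ ≤ 6 / 11) →
        dDensity k (by omega) x ≤ 2.014096) ∧
    ((6 / 11 ≤ x ⟨0, by omega⟩ ∨ 6 / 11 ≤ x ⟨1, by omega⟩) →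
        dDensity k (by omega) x ≤ 11 / 12) :=
  have bounds := dDensity_bounds_general k (by omega) x hx
  ⟨fun _ => bounds.1, bounds.2⟩
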